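/- Let δ21 = X² + 2X + 2, δ22 = X² + 2, δ41 = X⁴ + 2X³ + 2X² + 4X + 4, δ81 = X⁸ + 4X⁷ + 6X⁶ + 4X⁵ + 2X⁴ + 8X³ + 24X² + 32X + 16, and δ82 = X⁸ + 2X⁶ + 4X⁵ + 2X⁴ + 8X³ + 8X² + 16. Then for every n ≥ 4 (even or odd): F_2(n,0,0,0,0) = 2^{n−4} − (1/16)·(4ρ_n(δ21) + 3ρ_n(δ22) + ρ_n(δ41) + ρ_n(δ81) + ρ_n(δ82)); F_2(n,0,0,0,1) = 2^{n−4} − (1/16)·(−ρ_n(δ22) + ρ_n(δ41) − ρ_n(δ81) − ρ_n(δ82)); F_2(n,0,0,1,0) = 2^{n−4} − (1/16)·(−2ρ_n(δ21) + ρ_n(δ22) − ρ_n(δ41) + ρ_n(δ81) − ρ_n(δ82)); and F_2(n,0,0,1,1) = 2^{n−4} − (1/16)·(2ρ_n(δ21) − 3ρ_n(δ22) − ρ_n(δ41) − ρ_n(δ81) + ρ_n(δ82)). All equalities are between complex numbers, the counts being viewed in ℂ. -/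

import Mathlib

open Polynomial

/-- For a finite field `K` with `2^n` elements, the `k`-th trace function
`T_k(a) = Σ_S ∏_{i ∈ S} a^(2^i)`, the sum over all `k`-element subsets `S` of `{0,…,n-1}`. -/
noncomputable def traceFn (q n k : ℕ) {K : Type*} [CommRing K] (a : K) : K :=
  ∑ S ∈ Finset.powersetCard k (Finset.range n), ∏ i ∈ S, a ^ (q ^ i)

/-- `ρ_n(γ)`: the sum of the `n`-th powers of the complex roots of `γ ∈ ℤ[X]`,
counted with multiplicity. -/
noncomputable def rho (n : ℕ) (γ : Polynomial ℤ) : ℂ :=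
  ((γ.map (Int.castRingHom ℂ)).roots.map (· ^ n)).sum

/-- `F_2(n,t₁,t₂,t₃,t₄)`: the number of `a` in the field `K` (of `2^n` elements)
with `T_k(a) = t_k` for `k = 1,2,3,4`. -/
noncomputable def cnt4 (n : ℕ) (K : Type) [Field K] [Fintype K] (t1 t2 t3 t4 : K) : ℕ :=
  Nat.card {a : K // traceFn 2 n 1 a = t1 ∧ traceFn 2 n 2 a = t2 ∧
    traceFn 2 n 3 a = t3 ∧ traceFn 2 n 4 a = t4}

noncomputable def d21 : Polynomial ℤ := X ^ 2 + 2 * X + 2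
noncomputable def d22 : Polynomial ℤ := X ^ 2 + 2
noncomputable def d41 : Polynomial ℤ := X ^ 4 + 2 * X ^ 3 + 2 * X ^ 2 + 4 * X + 4
noncomputable def d81 : Polynomial ℤ :=
  X ^ 8 + 4 * X ^ 7 + 6 * X ^ 6 + 4 * X ^ 5 + 2 * X ^ 4 + 8 * X ^ 3 + 24 * X ^ 2 + 32 * X + 16
noncomputable def d82 : Polynomial ℤ :=
  X ^ 8 + 2 * X ^ 6 + 4 * X ^ 5 + 2 * X ^ 4 + 8 * X ^ 3 + 8 * X ^ 2 + 16


abbrev F2 := ZMod 2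

instance factPrimeTwoAux : Fact (Nat.Prime 2) := ⟨Nat.prime_two⟩

/-- monic polynomial of degree `m` with given coefficients (from the top). -/
noncomputable def polyOf (m : ℕ) (v : Fin m → F2) : F2[X] :=
  X ^ m + ∑ i : Fin m, C (v i) * X ^ (m - 1 - (i : ℕ))

lemma polyOf_sum_degree (m : ℕ) (v : Fin m → F2) :
    (∑ i : Fin m, C (v i) * X ^ (m - 1 - (i : ℕ)) : F2[X]).degree < m := by
  refine (degree_sum_le _ _).trans_lt ?_
  rw [Finset.sup_lt_iff (by exact WithBot.bot_lt_coe m)]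
  intro i _
  refine (degree_C_mul_X_pow_le _ _).trans_lt ?_
  have := i.2
  exact_mod_cast (by omega : m - 1 - (i : ℕ) < m)

lemma polyOf_monic (m : ℕ) (v : Fin m → F2) : (polyOf m v).Monic :=
  monic_X_pow_add (polyOf_sum_degree m v)

lemma polyOf_natDegree (m : ℕ) (v : Fin m → F2) : (polyOf m v).natDegree = m := by
  unfold polyOf
  rw [natDegree_add_eq_left_of_degree_lt, natDegree_X_pow]
  rw [degree_X_pow]; exact polyOf_sum_degree m v

lemma polyOf_coeff (m : ℕ) (v : Fin m → F2) (i : Fin m) :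
    (polyOf m v).coeff (m - 1 - (i : ℕ)) = v i := by
  have hi := i.2
  unfold polyOf
  rw [coeff_add, coeff_X_pow, if_neg (by omega), zero_add, finsetSum_coeff,
    Finset.sum_eq_single i]
  · simp
  · intro j _ hj
    have hj2 := j.2
    rw [coeff_C_mul, coeff_X_pow, if_neg, mul_zero]
    intro h; apply hj; ext; omega
  · simp

lemma polyOf_surj (m : ℕ) (f : F2[X]) (hf : f.Monic) (hd : f.natDegree = m) :
    polyOf m (fun i => f.coeff (m - 1 - (i : ℕ))) = f := by
  ext j
  rcases lt_trichotomy j m with h | h | h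
  · have := polyOf_coeff m (fun i => f.coeff (m - 1 - (i : ℕ))) ⟨m - 1 - j, by omega⟩
    simp only at this
    rwa [show m - 1 - (m - 1 - j) = j by omega] at this
  · have h1 := polyOf_monic m (fun i => f.coeff (m - 1 - (i : ℕ)))
    rw [Monic, leadingCoeff, polyOf_natDegree] at h1
    rw [Monic, leadingCoeff, hd] at hf
    rw [h, h1, hf]
  · rw [coeff_eq_zero_of_natDegree_lt (by rw [polyOf_natDegree]; exact h),
      coeff_eq_zero_of_natDegree_lt (by rw [hd]; exact h)]

lemma polyOf_inj (m : ℕ) : Function.Injective (polyOf m) := by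
  intro v w h
  ext i
  rw [← polyOf_coeff m v i, h, polyOf_coeff]

open Classical in
noncomputable def mon (m : ℕ) : Finset F2[X] := Finset.univ.image (polyOf m)

lemma mem_mon {m : ℕ} {f : F2[X]} : f ∈ mon m ↔ f.Monic ∧ f.natDegree = m := by
  classical
  simp only [mon, Finset.mem_image, Finset.mem_univ, true_and]
  constructor
  · rintro ⟨v, rfl⟩; exact ⟨polyOf_monic m v, polyOf_natDegree m v⟩
  · rintro ⟨h1, h2⟩; exact ⟨_, polyOf_surj m f h1 h2⟩

lemma sum_mon (m : ℕ) (g : F2[X] → ℂ) : ∑ f ∈ mon m, g f = ∑ v, g (polyOf m v) := by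
  classical
  unfold mon
  rw [Finset.sum_image (fun a _ b _ h => polyOf_inj m h)]

open Classical in
/-- monic irreducibles whose degree divides `k` -/
noncomputable def irr (k : ℕ) : Finset F2[X] :=
  ((Finset.range (k + 1)).biUnion mon).filter (fun P => Irreducible P ∧ P.natDegree ∣ k)

lemma mem_irr {k : ℕ} (hk : 1 ≤ k) {P : F2[X]} :
    P ∈ irr k ↔ P.Monic ∧ Irreducible P ∧ P.natDegree ∣ k := by
  classical
  simp only [irr, Finset.mem_filter, Finset.mem_biUnion, Finset.mem_range, mem_mon]
  constructor
  · rintro ⟨⟨j, _, h1, _⟩, h3⟩; exact ⟨h1, h3⟩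
  · rintro ⟨h1, h2, h3⟩
    exact ⟨⟨P.natDegree, Nat.lt_succ_of_le (Nat.le_of_dvd hk h3), h1, rfl⟩, h2, h3⟩

open Classical in
noncomputable def irrLe (m : ℕ) : Finset F2[X] :=
  ((Finset.range (m + 1)).biUnion mon).filter Irreducible

lemma mem_irrLe {m : ℕ} {P : F2[X]} :
    P ∈ irrLe m ↔ P.Monic ∧ Irreducible P ∧ P.natDegree ≤ m := by
  classical
  simp only [irrLe, Finset.mem_filter, Finset.mem_biUnion, Finset.mem_range, mem_mon]
  constructor
  · rintro ⟨⟨j, hj, h1, h2⟩, h3⟩; exact ⟨h1, h3, by omega⟩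
  · rintro ⟨h1, h2, h3⟩
    exact ⟨⟨P.natDegree, Nat.lt_succ_of_le h3, h1, rfl⟩, h2⟩

open UniqueFactorizationMonoid in
lemma pow_dvd_iff_count [DecidableEq F2[X]] {P f : F2[X]} (hP : P.Monic) (hi : Irreducible P)
    (hf : f ≠ 0) (j : ℕ) :
    P ^ j ∣ f ↔ j ≤ (normalizedFactors f).count P := by
  rw [pow_dvd_iff_le_emultiplicity, le_emultiplicity_iff_replicate_le_normalizedFactors hi hf,
    hP.normalize_eq_self, Multiset.le_count_iff_replicate_le]

open UniqueFactorizationMonoid in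
lemma natDegree_eq_sum_count [DecidableEq F2[X]] {f : F2[X]} {m : ℕ} (hf : f.Monic)
    (hd : f.natDegree = m) :
    m = ∑ P ∈ irrLe m, (normalizedFactors f).count P * P.natDegree := by
  have hprod : (normalizedFactors f).prod = f := by
    rw [prod_normalizedFactors_eq hf.ne_zero, hf.normalize_eq_self]
  have hmon : ∀ P ∈ normalizedFactors f, P.Monic := fun P hP => by
    have h1 := normalize_normalized_factor P hP
    have h2 := (irreducible_of_normalized_factor P hP).ne_zero
    rw [← h1]; exact monic_normalize h2
  have h1 : f.natDegree = ((normalizedFactors f).map natDegree).sum := by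
    conv_lhs => rw [← hprod]
    exact natDegree_multiset_prod_of_monic _ hmon
  rw [Finset.sum_multiset_map_count] at h1
  rw [← hd]
  conv_lhs => rw [h1]
  simp only [smul_eq_mul]
  apply Finset.sum_subset
  · intro P hP
    rw [Multiset.mem_toFinset] at hP
    rw [mem_irrLe]
    exact ⟨hmon P hP, irreducible_of_normalized_factor P hP,
      natDegree_le_of_dvd (dvd_of_mem_normalizedFactors hP) hf.ne_zero⟩
  · intro P _ hP
    rw [Multiset.mem_toFinset] at hP
    rw [Multiset.count_eq_zero_of_notMem hP, zero_mul]

open Classical in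
lemma degree_formula {f : F2[X]} {m : ℕ} (hf : f.Monic) (hd : f.natDegree = m) :
    m = ∑ k ∈ Finset.Icc 1 m, ∑ P ∈ irr k,
      if P ^ (k / P.natDegree) ∣ f then P.natDegree else 0 := by
  have h1 : ∀ k ∈ Finset.Icc 1 m, (∑ P ∈ irr k,
      if P ^ (k / P.natDegree) ∣ f then P.natDegree else 0) =
      ∑ P ∈ irrLe m, if P.natDegree ∣ k ∧ P ^ (k / P.natDegree) ∣ f then P.natDegree else 0 := by
    intro k hk
    rw [Finset.mem_Icc] at hk
    rw [← Finset.sum_subset (s₁ := irr k) (s₂ := irrLe m)]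
    · apply Finset.sum_congr rfl
      intro P hP
      rw [mem_irr hk.1] at hP
      simp [hP.2.2]
    · intro P hP
      rw [mem_irr hk.1] at hP
      rw [mem_irrLe]
      exact ⟨hP.1, hP.2.1, (Nat.le_of_dvd hk.1 hP.2.2).trans hk.2⟩
    · intro P hP hP2
      rw [mem_irrLe] at hP
      rw [mem_irr hk.1] at hP2
      rw [if_neg]
      rintro ⟨h, _⟩
      exact hP2 ⟨hP.1, hP.2.1, h⟩
  rw [Finset.sum_congr rfl h1, Finset.sum_comm]
  conv_lhs => rw [natDegree_eq_sum_count hf hd]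
  apply Finset.sum_congr rfl
  intro P hP
  rw [mem_irrLe] at hP
  have hpos : 0 < P.natDegree := hP.2.1.natDegree_pos
  rw [← Finset.sum_filter, Finset.sum_const, smul_eq_mul]
  congr 1
  set c := (UniqueFactorizationMonoid.normalizedFactors f).count P with hc
  have key := pow_dvd_iff_count hP.1 hP.2.1 hf.ne_zero
  rw [← hc] at key
  have hcard : (Finset.Icc 1 c).card = c := by simp
  rw [← hcard]
  symm
  apply Finset.card_bij (fun k _ => k / P.natDegree)
  · intro k hk
    simp only [Finset.mem_filter, Finset.mem_Icc] at hk ⊢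
    refine ⟨Nat.div_pos (Nat.le_of_dvd hk.1.1 hk.2.1) hpos, (key _).1 hk.2.2⟩
  · intro a ha b hb h
    simp only [Finset.mem_filter, Finset.mem_Icc] at ha hb
    rw [← Nat.div_mul_cancel ha.2.1, ← Nat.div_mul_cancel hb.2.1, h]
  · intro j hj
    simp only [Finset.mem_Icc] at hj
    refine ⟨j * P.natDegree, ?_, Nat.mul_div_cancel _ hpos⟩
    simp only [Finset.mem_filter, Finset.mem_Icc]
    rw [Nat.mul_div_cancel _ hpos]
    have hdv := (key j).2 hj.2
    refine ⟨⟨Nat.mul_pos hj.1 hpos, ?_⟩, dvd_mul_left _ _, hdv⟩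
    have := natDegree_le_of_dvd hdv hf.ne_zero
    rwa [natDegree_pow, hd] at this

noncomputable def Asum (c : F2[X] → ℂ) (m : ℕ) : ℂ := ∑ f ∈ mon m, c f
noncomputable def Ssum (c : F2[X] → ℂ) (k : ℕ) : ℂ :=
  ∑ P ∈ irr k, (P.natDegree : ℂ) * c (P ^ (k / P.natDegree))

open Classical in
lemma sum_dvd (c : F2[X] → ℂ) (hc : ∀ f g, f.Monic → g.Monic → c (f * g) = c f * c g)
    {m k : ℕ} (hkm : k ≤ m) {Q : F2[X]} (hQ : Q.Monic) (hd : Q.natDegree = k) :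
    ∑ f ∈ mon m, (if Q ∣ f then c f else 0) = c Q * Asum c (m - k) := by
  rw [← Finset.sum_filter, Asum, Finset.mul_sum]
  symm
  apply Finset.sum_bij (fun g _ => Q * g)
  · intro g hg
    rw [mem_mon] at hg
    rw [Finset.mem_filter, mem_mon]
    refine ⟨⟨hQ.mul hg.1, ?_⟩, dvd_mul_right _ _⟩
    rw [hQ.natDegree_mul hg.1]; omega
  · intro a _ b _ h
    exact mul_left_cancel₀ hQ.ne_zero h
  · intro f hf
    rw [Finset.mem_filter, mem_mon] at hf
    obtain ⟨⟨h1, h2⟩, g, rfl⟩ := hf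
    have hg : g.Monic := hQ.of_mul_monic_left h1
    rw [hQ.natDegree_mul hg] at h2
    exact ⟨g, mem_mon.2 ⟨hg, by omega⟩, rfl⟩
  · intro g hg
    rw [mem_mon] at hg
    rw [hc _ _ hQ hg.1]

lemma newton_chi (c : F2[X] → ℂ) (hc : ∀ f g, f.Monic → g.Monic → c (f * g) = c f * c g)
    (m : ℕ) :
    (m : ℂ) * Asum c m = ∑ k ∈ Finset.Icc 1 m, Ssum c k * Asum c (m - k) := by
  classical
  have h0 : (m : ℂ) * Asum c m = ∑ f ∈ mon m, ∑ k ∈ Finset.Icc 1 m, ∑ P ∈ irr k,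
      (P.natDegree : ℂ) * (if P ^ (k / P.natDegree) ∣ f then c f else 0) := by
    rw [Asum, Finset.mul_sum]
    apply Finset.sum_congr rfl
    intro f hf
    rw [mem_mon] at hf
    conv_lhs => rw [degree_formula hf.1 hf.2]
    push_cast
    rw [Finset.sum_mul]
    apply Finset.sum_congr rfl
    intro k _
    rw [Finset.sum_mul]
    apply Finset.sum_congr rfl
    intro P _
    split_ifs <;> simp
  rw [h0, Finset.sum_comm]
  apply Finset.sum_congr rfl
  intro k hk
  rw [Finset.mem_Icc] at hk
  rw [Finset.sum_comm, Ssum, Finset.sum_mul]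
  apply Finset.sum_congr rfl
  intro P hP
  rw [mem_irr hk.1] at hP
  rw [← Finset.mul_sum, sum_dvd c hc hk.2 (hP.1.pow _), mul_assoc]
  rw [natDegree_pow, Nat.div_mul_cancel hP.2.2]

set_option linter.unusedSectionVars false
section fieldpart

variable {K : Type} [Field K] [Fintype K] [Algebra F2 K]

lemma minpoly_natDegree_dvd_iff (a : K) (j : ℕ) :
    (minpoly F2 a).natDegree ∣ j ↔ a ^ 2 ^ j = a := by
  have hint : IsIntegral F2 a := Algebra.IsIntegral.isIntegral a
  rw [(minpoly.irreducible hint).natDegree_dvd_iff_dvd_X_pow_card_pow_sub_X, minpoly.dvd_iff]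
  simp [sub_eq_zero]

lemma frob_inj [CharP K 2] (i : ℕ) {a b : K} (h : a ^ 2 ^ i = b ^ 2 ^ i) : a = b :=
  iterateFrobenius_inj K 2 i (by simpa [iterateFrobenius_def] using h)

lemma minpoly_frob_root [CharP K 2] (a : K) (i : ℕ) :
    aeval (a ^ 2 ^ i) (minpoly F2 a) = 0 := by
  have h : ((minpoly F2 a).expand F2 (2 ^ i)) = (minpoly F2 a) ^ 2 ^ i := by
    have := Polynomial.map_iterateFrobenius_expand (R := F2) (p := 2) (minpoly F2 a) i
    rw [← this]
    have h2 : iterateFrobenius F2 2 i = RingHom.id F2 := Subsingleton.elim _ _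
    rw [h2, Polynomial.map_id]
  have := congrArg (aeval a) h
  rw [expand_aeval, map_pow, minpoly.aeval, zero_pow (by positivity)] at this
  exact this

lemma minpoly_map_eq [CharP K 2] (a : K) :
    (minpoly F2 a).map (algebraMap F2 K) =
      ∏ i ∈ Finset.range (minpoly F2 a).natDegree, (X - C (a ^ 2 ^ i)) := by
  have hint : IsIntegral F2 a := Algebra.IsIntegral.isIntegral a
  apply eq_of_monic_of_dvd_of_natDegree_le
  · exact monic_prod_of_monic _ _ (fun i _ => monic_X_sub_C _)
  · exact (minpoly.monic hint).map _
  · apply Finset.prod_dvd_of_coprime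
    · intro i hi j hj hij
      apply pairwise_coprime_X_sub_C (s := fun i : K => i) (fun _ _ h => h)
      intro h
      simp only [Finset.coe_range, Set.mem_Iio] at hi hj
      have aux : ∀ i j : ℕ, i < j → j < (minpoly F2 a).natDegree → a ^ 2 ^ i = a ^ 2 ^ j → False := by
        intro i j hij hj h
        have : a ^ 2 ^ (j - i) = a := by
          apply frob_inj i
          rw [← pow_mul, ← pow_add, Nat.sub_add_cancel hij.le, h]
        rw [← minpoly_natDegree_dvd_iff] at this
        have := Nat.le_of_dvd (by omega) this
        omega
      rcases lt_or_gt_of_ne hij with h1 | h1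
      · exact aux i j h1 hj h
      · exact aux j i h1 hi h.symm
    · intro i _
      rw [dvd_iff_isRoot, IsRoot, eval_map_algebraMap]
      exact minpoly_frob_root a i
  · rw [natDegree_prod_of_monic _ _ (fun i _ => monic_X_sub_C _)]
    simp only [natDegree_map, natDegree_X_sub_C]
    simp

lemma minpoly_pow_map_eq [CharP K 2] (a : K) (e : ℕ) :
    ((minpoly F2 a) ^ e).map (algebraMap F2 K) =
      ∏ i ∈ Finset.range ((minpoly F2 a).natDegree * e), (X - C (a ^ 2 ^ i)) := by
  rw [Polynomial.map_pow, minpoly_map_eq]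
  induction e with
  | zero => simp
  | succ e ih =>
    rw [pow_succ, ih, Nat.mul_succ, Finset.prod_range_add]
    congr 1
    apply Finset.prod_congr rfl
    intro i _
    rw [pow_add, pow_mul, (minpoly_natDegree_dvd_iff a _).1 (dvd_mul_right _ e)]

/-- characteristic polynomial over the prime field -/
noncomputable def chp (n : ℕ) (a : K) : F2[X] := minpoly F2 a ^ (n / (minpoly F2 a).natDegree)

lemma minpoly_deg_dvd {n : ℕ} (hK : Fintype.card K = 2 ^ n) (a : K) :
    (minpoly F2 a).natDegree ∣ n := by
  rw [minpoly_natDegree_dvd_iff, ← hK, FiniteField.pow_card]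

lemma chp_natDegree {n : ℕ} (hK : Fintype.card K = 2 ^ n) (a : K) : (chp n a).natDegree = n := by
  rw [chp, natDegree_pow, Nat.div_mul_cancel (minpoly_deg_dvd hK a)]

lemma chp_coeff [CharP K 2] {n : ℕ} (hK : Fintype.card K = 2 ^ n) (a : K) {k : ℕ} (hk : k ≤ n) :
    algebraMap F2 K ((chp n a).reverse.coeff k) = traceFn 2 n k a := by
  rw [coeff_reverse, chp_natDegree hK, revAt_le hk, ← coeff_map, chp, minpoly_pow_map_eq,
    Nat.mul_div_cancel' (minpoly_deg_dvd hK a)]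
  have h := Finset.prod_X_add_C_coeff (Finset.range n) (fun i => a ^ 2 ^ i) (k := n - k) (by simp)
  simp only [CharTwo.sub_eq_add]
  rw [h, traceFn, Finset.card_range, Nat.sub_sub_self hk]

lemma card_fiber {n : ℕ} (hn : 1 ≤ n) (hK : Fintype.card K = 2 ^ n) [DecidableEq F2[X]]
    {P : F2[X]} (hP : P ∈ irr n) :
    (Finset.univ.filter (fun a : K => minpoly F2 a = P)).card = P.natDegree := by
  classical
  rw [mem_irr hn] at hP
  obtain ⟨hm, hi, hd⟩ := hP
  rw [hi.natDegree_dvd_iff_dvd_X_pow_card_pow_sub_X] at hd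
  have hd2 := Polynomial.map_dvd (algebraMap F2 K) hd
  have hq : (X ^ Nat.card F2 ^ n - X : F2[X]).map (algebraMap F2 K) = X ^ Fintype.card K - X := by
    simp [hK]
  rw [hq] at hd2
  have hne : (X ^ Fintype.card K - X : K[X]) ≠ 0 :=
    FiniteField.X_pow_card_sub_X_ne_zero K Fintype.one_lt_card
  have hsp : (P.map (algebraMap F2 K)).Splits := by
    refine Splits.of_dvd ?_ hne hd2
    have := FiniteField.roots_X_pow_card_sub_X K
    rw [splits_iff_card_roots, this, FiniteField.X_pow_card_sub_X_natDegree_eq K Fintype.one_lt_card]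
    rfl
  have hr : (P.map (algebraMap F2 K)).roots ≤ (X ^ Fintype.card K - X : K[X]).roots :=
    roots.le_of_dvd hne hd2
  rw [FiniteField.roots_X_pow_card_sub_X] at hr
  have hnd : (P.map (algebraMap F2 K)).roots.Nodup := Multiset.nodup_of_le hr Finset.univ.nodup
  rw [splits_iff_card_roots, natDegree_map] at hsp
  rw [← hsp, ← Multiset.toFinset_card_of_nodup hnd]
  congr 1
  ext a
  simp only [Finset.mem_filter, Finset.mem_univ, true_and, Multiset.mem_toFinset]
  rw [mem_roots (hm.map _).ne_zero, IsRoot, eval_map_algebraMap]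
  constructor
  · rintro rfl; exact minpoly.aeval _ _
  · intro h; exact (minpoly.eq_of_irreducible_of_monic hi h hm).symm

lemma sum_chp {n : ℕ} (hn : 1 ≤ n) (hK : Fintype.card K = 2 ^ n) (c : F2[X] → ℂ) :
    ∑ a : K, c (chp n a) = Ssum c n := by
  classical
  rw [Ssum, ← Finset.sum_fiberwise_of_maps_to (s := Finset.univ) (t := irr n)
    (g := fun a : K => minpoly F2 a)]
  · apply Finset.sum_congr rfl
    intro P hP
    rw [← card_fiber hn hK hP, ← nsmul_eq_mul, ← Finset.sum_const]
    apply Finset.sum_congr rfl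
    intro a ha
    rw [Finset.mem_filter] at ha
    rw [chp, ha.2, card_fiber hn hK hP]
  · intro a _
    have hint : IsIntegral F2 a := Algebra.IsIntegral.isIntegral a
    rw [mem_irr hn]
    exact ⟨minpoly.monic hint, minpoly.irreducible hint, minpoly_deg_dvd hK a⟩

end fieldpart

def lam (a b c d : F2) : ℕ := a.val + 2 * b.val + 4 * (d + a * c + a * b).val
def mu (a b c : F2) : ℕ := (c + a * b).val

lemma lam_add : ∀ a b c d a1 b1 c1 d1 : F2,
    lam (a + a1) (b + a * a1 + b1) (c + b * a1 + a * b1 + c1)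
      (d + c * a1 + b * b1 + a * c1 + d1) % 8 = (lam a b c d + lam a1 b1 c1 d1) % 8 := by
  unfold lam; decide +kernel

lemma mu_add : ∀ a b c a1 b1 c1 : F2,
    mu (a + a1) (b + a * a1 + b1) (c + b * a1 + a * b1 + c1) % 2 = (mu a b c + mu a1 b1 c1) % 2 := by
  unfold mu; decide +kernel

noncomputable def psi (w s : ℂ) (a b c d : F2) : ℂ := w ^ lam a b c d * s ^ mu a b c

lemma psi_mul {w s : ℂ} (hw : w ^ 8 = 1) (hs : s ^ 2 = 1) (a b c d a1 b1 c1 d1 : F2) :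
    psi w s (a + a1) (b + a * a1 + b1) (c + b * a1 + a * b1 + c1)
      (d + c * a1 + b * b1 + a * c1 + d1) = psi w s a b c d * psi w s a1 b1 c1 d1 := by
  unfold psi
  rw [pow_eq_pow_mod _ hw, lam_add, ← pow_eq_pow_mod _ hw, pow_eq_pow_mod (mu _ _ _) hs, mu_add,
    ← pow_eq_pow_mod _ hs]
  ring

noncomputable def chi (w s : ℂ) (f : F2[X]) : ℂ :=
  psi w s (f.reverse.coeff 1) (f.reverse.coeff 2) (f.reverse.coeff 3) (f.reverse.coeff 4)

lemma rev_coeff_zero {f : F2[X]} (hf : f.Monic) : f.reverse.coeff 0 = 1 := by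
  rw [coeff_zero_reverse, hf]

lemma chi_mul {w s : ℂ} (hw : w ^ 8 = 1) (hs : s ^ 2 = 1) (f g : F2[X]) (hf : f.Monic)
    (hg : g.Monic) : chi w s (f * g) = chi w s f * chi w s g := by
  unfold chi
  rw [← psi_mul hw hs, reverse_mul_of_domain]
  congr 1 <;> rw [coeff_mul, Finset.Nat.sum_antidiagonal_eq_sum_range_succ_mk] <;>
    simp only [Finset.sum_range_succ, Finset.sum_range_zero, Nat.sub_self, Nat.sub_zero, Nat.reduceSub,
      rev_coeff_zero hf, rev_coeff_zero hg] <;> ring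

def nth (m : ℕ) (v : Fin m → F2) (i : ℕ) : F2 := if h : i < m then v ⟨i, h⟩ else 0

lemma polyOf_rev (m : ℕ) (v : Fin m → F2) (i : ℕ) :
    (polyOf m v).reverse.coeff (i + 1) = nth m v i := by
  rw [coeff_reverse, polyOf_natDegree, nth]
  split_ifs with h
  · rw [revAt_le (by omega), ← polyOf_coeff m v ⟨i, h⟩]
    congr 1; simp only; omega
  · rw [revAt_eq_self_of_lt (by omega)]
    exact coeff_eq_zero_of_natDegree_lt (by rw [polyOf_natDegree]; omega)

lemma chi_polyOf (w s : ℂ) (m : ℕ) (v : Fin m → F2) : chi w s (polyOf m v) =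
    psi w s (nth m v 0) (nth m v 1) (nth m v 2) (nth m v 3) := by
  rw [chi, polyOf_rev m v 0, polyOf_rev m v 1, polyOf_rev m v 2, polyOf_rev m v 3]

lemma Asum_chi (w s : ℂ) (m : ℕ) : Asum (chi w s) m =
    ∑ v, psi w s (nth m v 0) (nth m v 1) (nth m v 2) (nth m v 3) := by
  rw [Asum, sum_mon]
  simp only [chi_polyOf]

lemma sum_cons (k : ℕ) (g : (Fin (k + 1) → F2) → ℂ) :
    ∑ v, g v = ∑ v : Fin k → F2, (g (Fin.cons 0 v) + g (Fin.cons 1 v)) := by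
  rw [← (Fin.consEquiv (fun _ : Fin (k + 1) => F2)).sum_comp, Fintype.sum_prod_type,
    Finset.sum_add_distrib]
  exact Fin.sum_univ_two (fun x : Fin 2 => ∑ v : Fin k → F2, g (Fin.cons (α := fun _ => F2) x v))

lemma nth_cons_zero (k : ℕ) (x : F2) (v : Fin k → F2) :
    nth (k + 1) (Fin.cons x v : Fin (k + 1) → F2) 0 = x := by
  simp [nth]

lemma nth_cons_succ (k : ℕ) (x : F2) (v : Fin k → F2) (i : ℕ) :
    nth (k + 1) (Fin.cons x v : Fin (k + 1) → F2) (i + 1) = nth k v i := by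
  unfold nth
  by_cases h : i < k
  · rw [dif_pos h, dif_pos (by omega)]
    exact Fin.cons_succ (α := fun _ => F2) x v ⟨i, h⟩
  · rw [dif_neg h, dif_neg (by omega)]

lemma nth_zero (v : Fin 0 → F2) (i : ℕ) : nth 0 v i = 0 := by simp [nth]

lemma nc1 (k : ℕ) (x : F2) (v : Fin k → F2) :
    nth (k + 1) (Fin.cons x v : Fin (k + 1) → F2) 1 = nth k v 0 := nth_cons_succ k x v 0
lemma nc2 (k : ℕ) (x : F2) (v : Fin k → F2) :
    nth (k + 1) (Fin.cons x v : Fin (k + 1) → F2) 2 = nth k v 1 := nth_cons_succ k x v 1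
lemma nc3 (k : ℕ) (x : F2) (v : Fin k → F2) :
    nth (k + 1) (Fin.cons x v : Fin (k + 1) → F2) 3 = nth k v 2 := nth_cons_succ k x v 2

lemma psi_eval (w s : ℂ) (a b c d : F2) (l m : ℕ) (h1 : lam a b c d = l) (h2 : mu a b c = m) :
    psi w s a b c d = w ^ l * s ^ m := by rw [psi, h1, h2]

section table
variable (w s : ℂ)
lemma t0000 : psi w s 0 0 0 0 = 1 := by rw [psi_eval w s _ _ _ _ 0 0 rfl rfl]; ring
lemma t0010 : psi w s 0 0 1 0 = s := by rw [psi_eval w s _ _ _ _ 0 1 rfl rfl]; ring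
lemma t1000 : psi w s 1 0 0 0 = w := by rw [psi_eval w s _ _ _ _ 1 0 rfl rfl]; ring
lemma t1011 : psi w s 1 0 1 1 = w * s := by rw [psi_eval w s _ _ _ _ 1 1 rfl rfl]; ring
lemma t0100 : psi w s 0 1 0 0 = w ^ 2 := by rw [psi_eval w s _ _ _ _ 2 0 rfl rfl]; ring
lemma t0110 : psi w s 0 1 1 0 = w ^ 2 * s := by rw [psi_eval w s _ _ _ _ 2 1 rfl rfl]; ring
lemma t1110 : psi w s 1 1 1 0 = w ^ 3 := by rw [psi_eval w s _ _ _ _ 3 0 rfl rfl]; ring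
lemma t1101 : psi w s 1 1 0 1 = w ^ 3 * s := by rw [psi_eval w s _ _ _ _ 3 1 rfl rfl]; ring
lemma t0001 : psi w s 0 0 0 1 = w ^ 4 := by rw [psi_eval w s _ _ _ _ 4 0 rfl rfl]; ring
lemma t0011 : psi w s 0 0 1 1 = w ^ 4 * s := by rw [psi_eval w s _ _ _ _ 4 1 rfl rfl]; ring
lemma t1001 : psi w s 1 0 0 1 = w ^ 5 := by rw [psi_eval w s _ _ _ _ 5 0 rfl rfl]; ring
lemma t1010 : psi w s 1 0 1 0 = w ^ 5 * s := by rw [psi_eval w s _ _ _ _ 5 1 rfl rfl]; ring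
lemma t0101 : psi w s 0 1 0 1 = w ^ 6 := by rw [psi_eval w s _ _ _ _ 6 0 rfl rfl]; ring
lemma t0111 : psi w s 0 1 1 1 = w ^ 6 * s := by rw [psi_eval w s _ _ _ _ 6 1 rfl rfl]; ring
lemma t1111 : psi w s 1 1 1 1 = w ^ 7 := by rw [psi_eval w s _ _ _ _ 7 0 rfl rfl]; ring
lemma t1100 : psi w s 1 1 0 0 = w ^ 7 * s := by rw [psi_eval w s _ _ _ _ 7 1 rfl rfl]; ring

lemma A_zero : Asum (chi w s) 0 = 1 := by
  rw [Asum_chi]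
  simp [nth_zero, t0000]

lemma A_one : Asum (chi w s) 1 = 1 + w := by
  rw [Asum_chi, sum_cons]
  simp [nth_cons_zero, nc1, nc2, nc3, nth_zero, t0000, t1000]

lemma A_two : Asum (chi w s) 2 = 1 + w + w ^ 2 + w ^ 7 * s := by
  rw [Asum_chi, sum_cons, sum_cons]
  simp [nth_cons_zero, nc1, nc2, nc3, nth_zero, t0000, t1000, t0100, t1100]
  ring

lemma A_three : Asum (chi w s) 3 =
    1 + s + w ^ 2 + w ^ 2 * s + w + w ^ 5 * s + w ^ 7 * s + w ^ 3 := by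
  rw [Asum_chi, sum_cons, sum_cons, sum_cons]
  simp [nth_cons_zero, nc1, nc2, nc3, nth_zero, t0000, t1000, t0100, t1100, t0010, t1010, t0110,
    t1110]
  ring

lemma A_ge (k : ℕ) (h : (1 + s) * (1 + w + w ^ 2 + w ^ 3 + w ^ 4 + w ^ 5 + w ^ 6 + w ^ 7) = 0) :
    Asum (chi w s) (k + 4) = 0 := by
  rw [Asum_chi, sum_cons, sum_cons, sum_cons, sum_cons]
  simp only [nth_cons_zero, nc1, nc2, nc3, t0000, t1000, t0100, t1100, t0010, t1010, t0110,
    t1110, t0001, t1001, t0101, t1101, t0011, t1011, t0111, t1111]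
  apply Finset.sum_eq_zero
  intro v _
  linear_combination h
end table

/-- the (reciprocal) L-polynomial -/
noncomputable def Lp (w s : ℂ) : ℂ[X] :=
  X ^ 3 + C (1 + w) * X ^ 2 + C (1 + w + w ^ 2 + w ^ 7 * s) * X +
    C (1 + s + w ^ 2 + w ^ 2 * s + w + w ^ 5 * s + w ^ 7 * s + w ^ 3)

noncomputable def rhoC (n : ℕ) (p : ℂ[X]) : ℂ := (p.roots.map (· ^ n)).sum

lemma rhoC_mul (n : ℕ) {p q : ℂ[X]} (hp : p.Monic) (hq : q.Monic) :
    rhoC n (p * q) = rhoC n p + rhoC n q := by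
  rw [rhoC, roots_mul (mul_ne_zero hp.ne_zero hq.ne_zero)]
  simp [rhoC]

lemma rhoC_X_pow (n k : ℕ) (hn : 1 ≤ n) : rhoC n (X ^ k) = 0 := by
  rw [rhoC, roots_pow, roots_X, Multiset.map_nsmul, Multiset.sum_nsmul]
  simp [show n ≠ 0 by omega]

lemma cubic_roots (a b c : ℂ) : ∃ x y z : ℂ,
    (X ^ 3 + C a * X ^ 2 + C b * X + C c : ℂ[X]).roots = {x, y, z} ∧
    a = -(x + y + z) ∧ b = x * y + y * z + x * z ∧ c = - (x * y * z) := by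
  set p : ℂ[X] := X ^ 3 + C a * X ^ 2 + C b * X + C c with hp
  have hd : p.natDegree = 3 := by rw [hp]; compute_degree!
  have hm : p.Monic := by rw [hp]; monicity!
  have hs : p.Splits := IsAlgClosed.splits p
  have hc := hs
  rw [splits_iff_card_roots, hd, Multiset.card_eq_three] at hc
  obtain ⟨x, y, z, h⟩ := hc
  have he := hs.eq_prod_roots_of_monic hm
  rw [h] at he
  simp only [Multiset.insert_eq_cons, Multiset.map_cons, Multiset.prod_cons,
    Multiset.map_singleton, Multiset.prod_singleton] at he
  have ev : ∀ t : ℂ, t ^ 3 + a * t ^ 2 + b * t + c = (t - x) * ((t - y) * (t - z)) := by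
    intro t
    have := congrArg (eval t) he
    simpa [hp] using this
  refine ⟨x, y, z, h, ?_, ?_, ?_⟩
  · linear_combination (ev 1 + ev (-1) - 2 * ev 0) / 2
  · linear_combination (8 * ev 1 - 8 * ev (-1) - ev 2 + ev (-2)) / 12
  · linear_combination ev 0

lemma newton_abs (S : ℕ → ℂ) (A : ℕ → ℂ) (h0 : A 0 = 1) (h4 : ∀ k, A (k + 4) = 0)
    (hN : ∀ m : ℕ, (m : ℂ) * A m = ∑ k ∈ Finset.Icc 1 m, S k * A (m - k)) (n : ℕ) (hn : 1 ≤ n) :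
    S n = - rhoC n (X ^ 3 + C (A 1) * X ^ 2 + C (A 2) * X + C (A 3)) := by
  obtain ⟨x, y, z, hr, h1, h2, h3⟩ := cubic_roots (A 1) (A 2) (A 3)
  rw [rhoC, hr]
  simp only [Multiset.insert_eq_cons, Multiset.map_cons, Multiset.sum_cons,
    Multiset.map_singleton, Multiset.sum_singleton]
  have s1 : S 1 = -(x + (y + z)) := by
    have := hN 1
    simp [h0] at this
    rw [← this, h1]; ring
  have s2 : S 2 = -(x ^ 2 + (y ^ 2 + z ^ 2)) := by
    have := hN 2
    simp [Finset.sum_Icc_succ_top, h0] at this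
    rw [s1] at this
    linear_combination -this + 2 * h2 + (x + y + z) * h1
  have s3 : S 3 = -(x ^ 3 + (y ^ 3 + z ^ 3)) := by
    have := hN 3
    simp [Finset.sum_Icc_succ_top, h0] at this
    rw [s1, s2] at this
    linear_combination -this + 3 * h3 + (x + y + z) * h2 + (x ^ 2 + y ^ 2 + z ^ 2) * h1
  have hrec : ∀ k, S (k + 4) = -(A 1 * S (k + 3) + A 2 * S (k + 2) + A 3 * S (k + 1)) := by
    intro k
    have := hN (k + 4)
    rw [h4, mul_zero, Finset.sum_Icc_succ_top (by omega), Finset.sum_Icc_succ_top (by omega),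
      Finset.sum_Icc_succ_top (by omega), Finset.sum_Icc_succ_top (by omega),
      Finset.sum_eq_zero] at this
    · rw [show k + 4 - (k + 3 + 1) = 0 by omega, show k + 4 - (k + 2 + 1) = 1 by omega,
        show k + 4 - (k + 1 + 1) = 2 by omega, show k + 4 - (k + 1) = 3 by omega, h0] at this
      linear_combination -this
    · intro j hj
      rw [Finset.mem_Icc] at hj
      obtain ⟨i, hi⟩ : ∃ i, k + 4 - j = i + 4 := ⟨k - j, by omega⟩
      rw [hi, h4, mul_zero]
  have main : ∀ k, S (k + 1) = -(x ^ (k + 1) + (y ^ (k + 1) + z ^ (k + 1))) ∧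
      S (k + 2) = -(x ^ (k + 2) + (y ^ (k + 2) + z ^ (k + 2))) ∧
      S (k + 3) = -(x ^ (k + 3) + (y ^ (k + 3) + z ^ (k + 3))) := by
    intro k
    induction k with
    | zero =>
      simp only [zero_add, pow_one]
      exact ⟨s1, s2, s3⟩
    | succ k ih =>
      obtain ⟨i1, i2, i3⟩ := ih
      refine ⟨i2, i3, ?_⟩
      rw [show k + 1 + 3 = k + 4 by ring, hrec, i1, i2, i3, h1, h2, h3]
      ring
  obtain ⟨k, rfl⟩ : ∃ k, n = k + 1 := ⟨n - 1, by omega⟩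
  exact (main k).1

lemma Ssum_chi {w s : ℂ} (hw : w ^ 8 = 1) (hs : s ^ 2 = 1)
    (h : (1 + s) * (1 + w + w ^ 2 + w ^ 3 + w ^ 4 + w ^ 5 + w ^ 6 + w ^ 7) = 0)
    (n : ℕ) (hn : 1 ≤ n) : Ssum (chi w s) n = - rhoC n (Lp w s) := by
  have := newton_abs (Ssum (chi w s)) (Asum (chi w s)) (A_zero w s) (fun k => A_ge w s k h)
    (newton_chi _ (chi_mul hw hs)) n hn
  rw [this, A_one, A_two, A_three, Lp]

lemma f2_cases (x : F2) : x = 0 ∨ x = 1 := by revert x; decide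

/-- sum of a character function over eighth roots with `w^4 = 1` -/
noncomputable def evS (z : ℂ) (g : ℂ → ℂ) : ℂ := g 1 + g (-1) + g (z ^ 2) + g (-z ^ 2)
noncomputable def odS (z : ℂ) (g : ℂ → ℂ) : ℂ := g z + g (-z) + g (z ^ 3) + g (-z ^ 3)

lemma orth (z : ℂ) (hz : z ^ 4 = -1) (a b c d : F2) :
    (evS z (fun w => psi w 1 a b c d) + evS z (fun w => psi w (-1) a b c d) +
      odS z (fun w => psi w 1 a b c d) + odS z (fun w => psi w (-1) a b c d) =
      if a = 0 ∧ b = 0 ∧ c = 0 ∧ d = 0 then 16 else 0) ∧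
    (evS z (fun w => psi w 1 a b c d) + evS z (fun w => psi w (-1) a b c d) -
      odS z (fun w => psi w 1 a b c d) - odS z (fun w => psi w (-1) a b c d) =
      if a = 0 ∧ b = 0 ∧ c = 0 ∧ d = 1 then 16 else 0) ∧
    (evS z (fun w => psi w 1 a b c d) - evS z (fun w => psi w (-1) a b c d) +
      odS z (fun w => psi w 1 a b c d) - odS z (fun w => psi w (-1) a b c d) =
      if a = 0 ∧ b = 0 ∧ c = 1 ∧ d = 0 then 16 else 0) ∧
    (evS z (fun w => psi w 1 a b c d) - evS z (fun w => psi w (-1) a b c d) -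
      odS z (fun w => psi w 1 a b c d) + odS z (fun w => psi w (-1) a b c d) =
      if a = 0 ∧ b = 0 ∧ c = 1 ∧ d = 1 then 16 else 0) := by
  have h8 : z ^ 8 = 1 := by linear_combination (z ^ 4 - 1) * hz
  have h12 : z ^ 12 = -1 := by linear_combination (z ^ 8 - z ^ 4 + 1) * hz
  have h6 : z ^ 6 = -z ^ 2 := by linear_combination z ^ 2 * hz
  have h18 : z ^ 18 = z ^ 2 := by linear_combination z ^ 10 * h8 + z ^ 2 * h8
  rcases f2_cases a with rfl | rfl <;> rcases f2_cases b with rfl | rfl <;>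
  rcases f2_cases c with rfl | rfl <;> rcases f2_cases d with rfl | rfl <;>
  simp only [evS, odS, t0000, t1000, t0100, t1100, t0010, t1010, t0110,
    t1110, t0001, t1001, t0101, t1101, t0011, t1011, t0111, t1111, zero_ne_one, one_ne_zero,
    and_true, and_false, true_and, false_and, if_true, if_false] <;>
  refine ⟨?_, ?_, ?_, ?_⟩ <;> ring_nf <;> simp only [hz, h8, h12, h6, h18] <;> ring_nf

noncomputable def e21 : ℂ[X] := X ^ 2 + 2 * X + 2
noncomputable def e22 : ℂ[X] := X ^ 2 + 2
noncomputable def e41 : ℂ[X] := X ^ 4 + 2 * X ^ 3 + 2 * X ^ 2 + 4 * X + 4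
noncomputable def e81 : ℂ[X] :=
  X ^ 8 + 4 * X ^ 7 + 6 * X ^ 6 + 4 * X ^ 5 + 2 * X ^ 4 + 8 * X ^ 3 + 24 * X ^ 2 + 32 * X + 16
noncomputable def e82 : ℂ[X] :=
  X ^ 8 + 2 * X ^ 6 + 4 * X ^ 5 + 2 * X ^ 4 + 8 * X ^ 3 + 8 * X ^ 2 + 16

lemma e21_monic : e21.Monic := by unfold e21; monicity!
lemma e22_monic : e22.Monic := by unfold e22; monicity!
lemma e41_monic : e41.Monic := by unfold e41; monicity!
lemma e81_monic : e81.Monic := by unfold e81; monicity!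
lemma e82_monic : e82.Monic := by unfold e82; monicity!
lemma Lp_monic (w s : ℂ) : (Lp w s).Monic := by unfold Lp; monicity!


section products

lemma prod_e0 (z : ℂ) (hz : z ^ 4 = -1) : Lp (-1) 1 * (Lp (z ^ 2) 1 * Lp (-z ^ 2) 1) = X ^ 7 * e21 := by
  have hZ : (C z : ℂ[X]) ^ 4 = -1 := by rw [← C_pow, hz]; simp
  simp only [Lp, e21, map_add, map_mul, map_neg, map_pow, map_one]
  grind

lemma prod_e1 (z : ℂ) (hz : z ^ 4 = -1) : Lp 1 (-1) * Lp (-1) (-1) * (Lp (z ^ 2) (-1) * Lp (-z ^ 2) (-1)) =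
    X ^ 4 * (e21 * (e22 * e41)) := by
  have hZ : (C z : ℂ[X]) ^ 4 = -1 := by rw [← C_pow, hz]; simp
  simp only [Lp, e21, e22, e41, map_add, map_mul, map_neg, map_pow, map_one]
  grind

lemma prod_o0 (z : ℂ) (hz : z ^ 4 = -1) : Lp z 1 * Lp (-z) 1 * (Lp (z ^ 3) 1 * Lp (-z ^ 3) 1) = e22 * e22 * e81 := by
  have hZ : (C z : ℂ[X]) ^ 4 = -1 := by rw [← C_pow, hz]; simp
  simp only [Lp, e22, e81, map_add, map_mul, map_neg, map_pow, map_one]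
  grind

lemma prod_o1 (z : ℂ) (hz : z ^ 4 = -1) : Lp z (-1) * Lp (-z) (-1) * (Lp (z ^ 3) (-1) * Lp (-z ^ 3) (-1)) =
    e21 * e21 * e82 := by
  have hZ : (C z : ℂ[X]) ^ 4 = -1 := by rw [← C_pow, hz]; simp
  simp only [Lp, e21, e82, map_add, map_mul, map_neg, map_pow, map_one]
  grind

lemma rho_e0 (z : ℂ) (hz : z ^ 4 = -1) (n : ℕ) (hn : 1 ≤ n) :
    rhoC n (Lp (-1) 1) + (rhoC n (Lp (z ^ 2) 1) + rhoC n (Lp (-z ^ 2) 1)) = rhoC n e21 := by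
  have := congrArg (rhoC n) (prod_e0 z hz)
  have m := Lp_monic
  rw [rhoC_mul n (m _ _) ((m _ _).mul (m _ _)), rhoC_mul n (m _ _) (m _ _),
    rhoC_mul n (monic_X_pow 7) e21_monic, rhoC_X_pow n 7 hn, zero_add] at this
  exact this

lemma rho_e1 (z : ℂ) (hz : z ^ 4 = -1) (n : ℕ) (hn : 1 ≤ n) :
    rhoC n (Lp 1 (-1)) + rhoC n (Lp (-1) (-1)) + (rhoC n (Lp (z ^ 2) (-1)) +
      rhoC n (Lp (-z ^ 2) (-1))) = rhoC n e21 + (rhoC n e22 + rhoC n e41) := by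
  have := congrArg (rhoC n) (prod_e1 z hz)
  have m := Lp_monic
  rw [rhoC_mul n ((m _ _).mul (m _ _)) ((m _ _).mul (m _ _)), rhoC_mul n (m _ _) (m _ _),
    rhoC_mul n (m _ _) (m _ _),
    rhoC_mul n (monic_X_pow 4) (e21_monic.mul (e22_monic.mul e41_monic)), rhoC_X_pow n 4 hn,
    zero_add, rhoC_mul n e21_monic (e22_monic.mul e41_monic), rhoC_mul n e22_monic e41_monic] at this
  exact this

lemma rho_o0 (z : ℂ) (hz : z ^ 4 = -1) (n : ℕ) :
    rhoC n (Lp z 1) + rhoC n (Lp (-z) 1) + (rhoC n (Lp (z ^ 3) 1) +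
      rhoC n (Lp (-z ^ 3) 1)) = rhoC n e22 + rhoC n e22 + rhoC n e81 := by
  have := congrArg (rhoC n) (prod_o0 z hz)
  have m := Lp_monic
  rw [rhoC_mul n ((m _ _).mul (m _ _)) ((m _ _).mul (m _ _)), rhoC_mul n (m _ _) (m _ _),
    rhoC_mul n (m _ _) (m _ _), rhoC_mul n (e22_monic.mul e22_monic) e81_monic,
    rhoC_mul n e22_monic e22_monic] at this
  exact this

lemma rho_o1 (z : ℂ) (hz : z ^ 4 = -1) (n : ℕ) :
    rhoC n (Lp z (-1)) + rhoC n (Lp (-z) (-1)) + (rhoC n (Lp (z ^ 3) (-1)) +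
      rhoC n (Lp (-z ^ 3) (-1))) = rhoC n e21 + rhoC n e21 + rhoC n e82 := by
  have := congrArg (rhoC n) (prod_o1 z hz)
  have m := Lp_monic
  rw [rhoC_mul n ((m _ _).mul (m _ _)) ((m _ _).mul (m _ _)), rhoC_mul n (m _ _) (m _ _),
    rhoC_mul n (m _ _) (m _ _), rhoC_mul n (e21_monic.mul e21_monic) e82_monic,
    rhoC_mul n e21_monic e21_monic] at this
  exact this
end products

lemma rho_d21 (n : ℕ) : rho n d21 = rhoC n e21 := by
  simp [rho, rhoC, d21, e21, Polynomial.map_add, Polynomial.map_mul]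
lemma rho_d22 (n : ℕ) : rho n d22 = rhoC n e22 := by
  simp [rho, rhoC, d22, e22]
lemma rho_d41 (n : ℕ) : rho n d41 = rhoC n e41 := by
  simp [rho, rhoC, d41, e41]
lemma rho_d81 (n : ℕ) : rho n d81 = rhoC n e81 := by
  simp [rho, rhoC, d81, e81]
lemma rho_d82 (n : ℕ) : rho n d82 = rhoC n e82 := by
  simp [rho, rhoC, d82, e82]

section final
variable {K : Type} [Field K] [Fintype K] [Algebra F2 K] [CharP K 2]

/-- the character sum over the field -/
noncomputable def Gs (n : ℕ) (K : Type) [Field K] [Fintype K] [Algebra F2 K] (w s : ℂ) : ℂ :=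
  ∑ a : K, chi w s (chp n a)

lemma cnt_eq {n : ℕ} (hn : 4 ≤ n) (hK : Fintype.card K = 2 ^ n) (u v : F2) :
    (cnt4 n K 0 0 (algebraMap F2 K u) (algebraMap F2 K v) : ℂ) * 16 =
    ∑ a : K, if (chp n a).reverse.coeff 1 = 0 ∧ (chp n a).reverse.coeff 2 = 0 ∧
      (chp n a).reverse.coeff 3 = u ∧ (chp n a).reverse.coeff 4 = v then (16 : ℂ) else 0 := by
  classical
  have inj := (algebraMap F2 K).injective
  rw [cnt4, Nat.card_eq_fintype_card, Fintype.card_subtype, ← Finset.sum_filter, Finset.sum_const,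
    nsmul_eq_mul]
  congr 3
  ext a
  simp only [Finset.mem_filter, Finset.mem_univ, true_and]
  rw [← chp_coeff hK a (by omega : 1 ≤ n), ← chp_coeff hK a (by omega : 2 ≤ n),
    ← chp_coeff hK a (by omega : 3 ≤ n), ← chp_coeff hK a (by omega : 4 ≤ n),
    inj.eq_iff, inj.eq_iff, map_eq_zero_iff _ inj, map_eq_zero_iff _ inj]

lemma sum_evS (n : ℕ) (z s : ℂ) : ∑ a : K, evS z (fun w => psi w s ((chp n a).reverse.coeff 1)
    ((chp n a).reverse.coeff 2) ((chp n a).reverse.coeff 3) ((chp n a).reverse.coeff 4)) =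
    evS z (fun w => Gs n K w s) := by
  simp only [evS, Gs, chi, Finset.sum_add_distrib]

lemma sum_odS (n : ℕ) (z s : ℂ) : ∑ a : K, odS z (fun w => psi w s ((chp n a).reverse.coeff 1)
    ((chp n a).reverse.coeff 2) ((chp n a).reverse.coeff 3) ((chp n a).reverse.coeff 4)) =
    odS z (fun w => Gs n K w s) := by
  simp only [odS, Gs, chi, Finset.sum_add_distrib]

lemma Gs_eq {n : ℕ} (hn : 1 ≤ n) (hK : Fintype.card K = 2 ^ n) {w s : ℂ}
    (hw : w ^ 8 = 1) (hs : s ^ 2 = 1)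
    (h : (1 + s) * (1 + w + w ^ 2 + w ^ 3 + w ^ 4 + w ^ 5 + w ^ 6 + w ^ 7) = 0) :
    Gs n K w s = - rhoC n (Lp w s) := by
  rw [Gs, sum_chp hn hK, Ssum_chi hw hs h n hn]

lemma Gs_triv {n : ℕ} (hK : Fintype.card K = 2 ^ n) : Gs n K 1 1 = 2 ^ n := by
  simp [Gs, chi, psi, hK]

lemma ev_one {n : ℕ} (hn : 1 ≤ n) (hK : Fintype.card K = 2 ^ n) (z : ℂ) (hz : z ^ 4 = -1) :
    evS z (fun w => Gs n K w 1) = 2 ^ n - rhoC n e21 := by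
  rw [evS, Gs_triv hK, Gs_eq hn hK (by norm_num) (by norm_num) (by norm_num),
    Gs_eq hn hK (w := z ^ 2) (by grind) (by norm_num) (by grind),
    Gs_eq hn hK (w := -z ^ 2) (by grind) (by norm_num) (by grind)]
  linear_combination - rho_e0 z hz n hn

lemma ev_neg {n : ℕ} (hn : 1 ≤ n) (hK : Fintype.card K = 2 ^ n) (z : ℂ) (hz : z ^ 4 = -1) :
    evS z (fun w => Gs n K w (-1)) = - (rhoC n e21 + (rhoC n e22 + rhoC n e41)) := by
  rw [evS, Gs_eq hn hK (w := 1) (by norm_num) (by norm_num) (by norm_num),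
    Gs_eq hn hK (w := -1) (by norm_num) (by norm_num) (by norm_num),
    Gs_eq hn hK (w := z ^ 2) (by grind) (by norm_num) (by grind),
    Gs_eq hn hK (w := -z ^ 2) (by grind) (by norm_num) (by grind)]
  linear_combination - rho_e1 z hz n hn

lemma od_one {n : ℕ} (hn : 1 ≤ n) (hK : Fintype.card K = 2 ^ n) (z : ℂ) (hz : z ^ 4 = -1) :
    odS z (fun w => Gs n K w 1) = - (rhoC n e22 + rhoC n e22 + rhoC n e81) := by
  rw [odS, Gs_eq hn hK (w := z) (by grind) (by norm_num) (by grind),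
    Gs_eq hn hK (w := -z) (by grind) (by norm_num) (by grind),
    Gs_eq hn hK (w := z ^ 3) (by grind) (by norm_num) (by grind),
    Gs_eq hn hK (w := -z ^ 3) (by grind) (by norm_num) (by grind)]
  linear_combination - rho_o0 z hz n

lemma od_neg {n : ℕ} (hn : 1 ≤ n) (hK : Fintype.card K = 2 ^ n) (z : ℂ) (hz : z ^ 4 = -1) :
    odS z (fun w => Gs n K w (-1)) = - (rhoC n e21 + rhoC n e21 + rhoC n e82) := by
  rw [odS, Gs_eq hn hK (w := z) (by grind) (by norm_num) (by grind),
    Gs_eq hn hK (w := -z) (by grind) (by norm_num) (by grind),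
    Gs_eq hn hK (w := z ^ 3) (by grind) (by norm_num) (by grind),
    Gs_eq hn hK (w := -z ^ 3) (by grind) (by norm_num) (by grind)]
  linear_combination - rho_o1 z hz n

end final

theorem statement13 (n : ℕ) (hn : 4 ≤ n)
    (K : Type) [Field K] [Fintype K] (hK : Fintype.card K = 2 ^ n) :
    ((cnt4 n K 0 0 0 0 : ℂ)
      = 2 ^ (n - 4) - (1 / 16) *
          (4 * rho n d21 + 3 * rho n d22 + rho n d41 + rho n d81 + rho n d82)) ∧
    ((cnt4 n K 0 0 0 1 : ℂ)
      = 2 ^ (n - 4) - (1 / 16) *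
          (-rho n d22 + rho n d41 - rho n d81 - rho n d82)) ∧
    ((cnt4 n K 0 0 1 0 : ℂ)
      = 2 ^ (n - 4) - (1 / 16) *
          (-2 * rho n d21 + rho n d22 - rho n d41 + rho n d81 - rho n d82)) ∧
    ((cnt4 n K 0 0 1 1 : ℂ)
      = 2 ^ (n - 4) - (1 / 16) *
          (2 * rho n d21 - 3 * rho n d22 - rho n d41 - rho n d81 + rho n d82)) := by
  have hch : CharP K 2 := by
    obtain ⟨p, hp⟩ := CharP.exists K
    have hpp : p.Prime := CharP.char_is_prime K p
    have hz : ((2 ^ n : ℕ) : K) = 0 := by rw [← hK]; exact Nat.cast_card_eq_zero K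
    rw [CharP.cast_eq_zero_iff K p] at hz
    have := (Nat.prime_dvd_prime_iff_eq hpp Nat.prime_two).1 (hpp.dvd_of_dvd_pow hz)
    rwa [this] at hp
  let _ : Algebra F2 K := ZMod.algebra K 2
  obtain ⟨z, hz⟩ : ∃ z : ℂ, z ^ 4 = -1 := IsAlgClosed.exists_pow_nat_eq _ (by norm_num)
  have hn1 : 1 ≤ n := by omega
  have e0 := ev_one hn1 hK z hz
  have e1 := ev_neg hn1 hK z hz
  have o0 := od_one hn1 hK z hz
  have o1 := od_neg hn1 hK z hz
  have h2 : (2 : ℂ) ^ n = 16 * 2 ^ (n - 4) := by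
    rw [show (16 : ℂ) = 2 ^ 4 by norm_num, ← pow_add]; congr 1; omega
  have c00 := cnt_eq hn hK 0 0
  have c01 := cnt_eq hn hK 0 1
  have c10 := cnt_eq hn hK 1 0
  have c11 := cnt_eq hn hK 1 1
  simp only [← (orth z hz _ _ _ _).1, Finset.sum_add_distrib, Finset.sum_sub_distrib, sum_evS,
    sum_odS, map_zero] at c00
  simp only [← (orth z hz _ _ _ _).2.1, Finset.sum_add_distrib, Finset.sum_sub_distrib, sum_evS,
    sum_odS, map_zero, map_one] at c01
  simp only [← (orth z hz _ _ _ _).2.2.1, Finset.sum_add_distrib, Finset.sum_sub_distrib, sum_evS,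
    sum_odS, map_zero, map_one] at c10
  simp only [← (orth z hz _ _ _ _).2.2.2, Finset.sum_add_distrib, Finset.sum_sub_distrib, sum_evS,
    sum_odS, map_one] at c11
  rw [e0, e1, o0, o1, h2] at c00 c01 c10 c11
  rw [rho_d21, rho_d22, rho_d41, rho_d81, rho_d82]
  refine ⟨?_, ?_, ?_, ?_⟩
  · linear_combination c00 / 16
  · linear_combination c01 / 16
  · linear_combination c10 / 16
  · linear_combination c11 / 16
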